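/- Partially classical form of stronger subadditivity: Let ρ₁₂₃ be a density matrix on H₁⊗H₂⊗H₃ and let P^1,…,P^M be positive semidefinite operators on H₁ with ∑_α P^α = id_{H₁}. Define S^{cl,Q,Q}[ρ₁₂₃] = ∑_α S[ Tr₁[(P^α⊗id₂₃) ρ₁₂₃] ] and S^{cl,Q}[ρ₁₂] = ∑_α S[ Tr₁[(P^α⊗id₂) ρ₁₂] ], where ρ₁₂ = Tr₃ ρ₁₂₃. Then S[ρ₁₂₃] − S[ρ₁₂] ≤ S^{cl,Q,Q}[ρ₁₂₃] − S^{cl,Q}[ρ₁₂]. -/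

import Mathlib

open Matrix Kronecker Real
open scoped ComplexOrder

/-- Von Neumann entropy of a (Hermitian) matrix: the sum of `-λ ln λ` over its
eigenvalues, with the convention `0 ln 0 = 0`. -/
noncomputable def entropy {n : Type*} [Fintype n] [DecidableEq n]
    (A : Matrix n n ℂ) : ℝ :=
  if h : A.IsHermitian then ∑ i, Real.negMulLog (h.eigenvalues i) else 0

/-- Partial trace over the first factor of a twofold tensor product. -/
noncomputable def ptraceFst {m k : Type*} [Fintype m]
    (ρ : Matrix (m × k) (m × k) ℂ) : Matrix k k ℂ :=
  Matrix.of fun i j => ∑ a : m, ρ (a, i) (a, j)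

/-- Partial trace over the second factor of a twofold tensor product. -/
noncomputable def ptraceSnd {m k : Type*} [Fintype k]
    (ρ : Matrix (m × k) (m × k) ℂ) : Matrix m m ℂ :=
  Matrix.of fun i j => ∑ a : k, ρ (i, a) (j, a)

/-- Partial trace over the first factor of a threefold tensor product
(indexed as `(H₁ ⊗ H₂) ⊗ H₃`). -/
noncomputable def ptraceFst₃ {a b c : Type*} [Fintype a]
    (ρ : Matrix ((a × b) × c) ((a × b) × c) ℂ) : Matrix (b × c) (b × c) ℂ :=
  Matrix.of fun p q => ∑ i : a, ρ ((i, p.1), p.2) ((i, q.1), q.2)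

/-!
For `σ = ρ₁₂ ⊗ 1` one has `S[ρ₁₂] - S[ρ₁₂₃] = D(ρ₁₂₃‖σ)`, and the same identity holds for the
unnormalized states `Tr₁[P^α ρ₁₂₃]` of the individual outcomes. The theorem is therefore the
monotonicity of the relative entropy under the measurement channel, whose dual
`Y ↦ ∑ α, P^α ⊗ Y α` is unital and satisfies the Kadison–Schwarz inequality.

Monotonicity comes from a variational formula. Up to an explicit multiple of `log t`, the relative
entropy `D(A‖B)` is the limit as `t → 0⁺` of the increment over `[t, t⁻¹]` of
`F(t) = Tr[A log(L_B + t R_A)]`, where `L_B` and `R_A` are left multiplication by `B` and right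
multiplication by `A`. The derivative `F'(t) = ⟨A, (L_B + t R_A)⁻¹ A⟩` is the maximum over `Z` of
`2 Re Tr(A Z*) - Tr(B Z Z*) - t Tr(A Z* Z)`, and the Schwarz inequality shows that this maximum can
only decrease under the channel.
-/

open Filter Topology

section Hermitian

variable {n : Type*} [Fintype n] [DecidableEq n] {A B : Matrix n n ℂ}

theorem continuousOn_spectrum_real (A : Matrix n n ℂ) (f : ℝ → ℝ) :
    ContinuousOn f (spectrum ℝ A) :=
  A.finite_real_spectrum.continuousOn f

theorem cfc_eq_eigenvectorUnitary_mul (hA : A.IsHermitian) (f : ℝ → ℝ) :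
    cfc f A = (hA.eigenvectorUnitary : Matrix n n ℂ) *
      diagonal (fun i => (f (hA.eigenvalues i) : ℂ)) * (hA.eigenvectorUnitary : Matrix n n ℂ)ᴴ := by
  rw [hA.cfc_eq, IsHermitian.cfc, Unitary.conjStarAlgAut_apply]
  rfl

theorem trace_cfc (hA : A.IsHermitian) (f : ℝ → ℝ) :
    trace (cfc f A) = ∑ i, (f (hA.eigenvalues i) : ℂ) := by
  rw [cfc_eq_eigenvectorUnitary_mul hA, trace_mul_cycle, ← star_eq_conjTranspose,
    Unitary.coe_star_mul_self, one_mul, trace_diagonal]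

theorem mul_cfc_self (hA : A.IsHermitian) (f : ℝ → ℝ) :
    A * cfc f A = cfc (fun x => x * f x) A := by
  rw [cfc_mul _ _ A (hg := continuousOn_spectrum_real A _), cfc_id' ℝ A hA.isSelfAdjoint]

theorem entropy_eq_neg_trace_mul_cfc_log (hA : A.IsHermitian) :
    entropy A = -(trace (A * cfc Real.log A)).re := by
  simp [entropy, dif_pos hA, mul_cfc_self hA, trace_cfc hA, negMulLog]

/-- The matrix of `X`, read from the eigenbasis of `A` to the eigenbasis of `B`. -/
noncomputable def eigenCoords (hA : A.IsHermitian) (hB : B.IsHermitian) (X : Matrix n n ℂ) :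
    Matrix n n ℂ :=
  (hB.eigenvectorUnitary : Matrix n n ℂ)ᴴ * X * hA.eigenvectorUnitary

theorem exists_eigenCoords_eq (hA : A.IsHermitian) (hB : B.IsHermitian) (Z : Matrix n n ℂ) :
    ∃ X, eigenCoords hA hB X = Z := by
  refine ⟨hB.eigenvectorUnitary * Z * (hA.eigenvectorUnitary : Matrix n n ℂ)ᴴ, ?_⟩
  simp only [eigenCoords, ← star_eq_conjTranspose, ← mul_assoc, Unitary.coe_star_mul_self, one_mul]
  rw [mul_assoc, Unitary.coe_star_mul_self, mul_one]

theorem trace_cfc_mul_conjTranspose_mul_cfc_mul (hA : A.IsHermitian) (hB : B.IsHermitian)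
    (f g : ℝ → ℝ) (X Y : Matrix n n ℂ) :
    trace (cfc f A * Xᴴ * cfc g B * Y) =
      ∑ i, ∑ j, (f (hA.eigenvalues i) * g (hB.eigenvalues j) : ℂ) *
        (star (eigenCoords hA hB X j i) * eigenCoords hA hB Y j i) := by
  have hcycle : trace (cfc f A * Xᴴ * cfc g B * Y) =
      trace (diagonal (fun i => (f (hA.eigenvalues i) : ℂ)) * (eigenCoords hA hB X)ᴴ *
        (diagonal (fun j => (g (hB.eigenvalues j) : ℂ)) * eigenCoords hA hB Y)) := by
    rw [cfc_eq_eigenvectorUnitary_mul hA, cfc_eq_eigenvectorUnitary_mul hB]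
    simp only [eigenCoords, conjTranspose_mul, conjTranspose_conjTranspose, mul_assoc]
    rw [trace_mul_comm]
    simp only [mul_assoc]
  rw [hcycle, trace]
  refine Finset.sum_congr rfl fun i _ => ?_
  rw [diag_apply, mul_apply]
  refine Finset.sum_congr rfl fun j _ => ?_
  rw [diagonal_mul, diagonal_mul, conjTranspose_apply]
  ring

/-- The trace `Tr f(R_A, L_B)(1)` of the joint functional calculus of right multiplication by `A`
and left multiplication by `B`: the sum of `f a b` over the pairs of eigenvalues, weighted with the
squared overlaps of the corresponding eigenvectors. -/
noncomputable def jointTrace (hA : A.IsHermitian) (hB : B.IsHermitian) (f : ℝ → ℝ → ℝ) : ℝ :=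
  ∑ i, ∑ j, Complex.normSq (eigenCoords hA hB 1 j i) * f (hA.eigenvalues i) (hB.eigenvalues j)

theorem jointTrace_mul (hA : A.IsHermitian) (hB : B.IsHermitian) (f g : ℝ → ℝ) :
    jointTrace hA hB (fun x y => f x * g y) = (trace (cfc f A * cfc g B)).re := by
  have h := trace_cfc_mul_conjTranspose_mul_cfc_mul hA hB f g 1 1
  rw [conjTranspose_one, mul_one, mul_one] at h
  simp only [h, jointTrace, Complex.re_sum]
  refine Finset.sum_congr rfl fun i _ => Finset.sum_congr rfl fun j _ => ?_
  rw [Complex.star_def, ← Complex.normSq_eq_conj_mul_self, ← Complex.ofReal_mul,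
    ← Complex.ofReal_mul, Complex.ofReal_re, mul_comm]

theorem jointTrace_add (hA : A.IsHermitian) (hB : B.IsHermitian) (f g : ℝ → ℝ → ℝ) :
    jointTrace hA hB (fun x y => f x y + g x y) = jointTrace hA hB f + jointTrace hA hB g := by
  simp only [jointTrace, mul_add, Finset.sum_add_distrib]

theorem jointTrace_sub (hA : A.IsHermitian) (hB : B.IsHermitian) (f g : ℝ → ℝ → ℝ) :
    jointTrace hA hB (fun x y => f x y - g x y) = jointTrace hA hB f - jointTrace hA hB g := by
  simp only [jointTrace, mul_sub, Finset.sum_sub_distrib]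

theorem jointTrace_fst (hA : A.IsHermitian) (hB : B.IsHermitian) (f : ℝ → ℝ) :
    jointTrace hA hB (fun x _ => f x) = (trace (cfc f A)).re := by
  simpa [cfc_const_one ℝ B] using jointTrace_mul hA hB f fun _ => 1

theorem jointTrace_fst_mul_const (hA : A.IsHermitian) (hB : B.IsHermitian) (c : ℝ) :
    jointTrace hA hB (fun x _ => x * c) = (trace A).re * c := by
  have h := jointTrace_fst hA hB fun x => x
  rw [cfc_id' ℝ A hA.isSelfAdjoint] at h
  simp only [← h, jointTrace, Finset.sum_mul, mul_assoc]

theorem tendsto_jointTrace (hA : A.IsHermitian) (hB : B.IsHermitian) {l : Filter ℝ}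
    {F : ℝ → ℝ → ℝ → ℝ} {f : ℝ → ℝ → ℝ}
    (h : ∀ i j, eigenCoords hA hB 1 j i ≠ 0 →
      Tendsto (fun t => F t (hA.eigenvalues i) (hB.eigenvalues j)) l
        (𝓝 (f (hA.eigenvalues i) (hB.eigenvalues j)))) :
    Tendsto (fun t => jointTrace hA hB (F t)) l (𝓝 (jointTrace hA hB f)) := by
  refine tendsto_finsetSum _ fun i _ => tendsto_finsetSum _ fun j _ => ?_
  by_cases hij : eigenCoords hA hB 1 j i = 0
  · simpa [hij] using tendsto_const_nhds
  · exact (h i j hij).const_mul _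

theorem hasDerivAt_jointTrace (hA : A.IsHermitian) (hB : B.IsHermitian)
    {F : ℝ → ℝ → ℝ → ℝ} {F' : ℝ → ℝ → ℝ} {t : ℝ}
    (h : ∀ i j, HasDerivAt (fun t => F t (hA.eigenvalues i) (hB.eigenvalues j))
      (F' (hA.eigenvalues i) (hB.eigenvalues j)) t) :
    HasDerivAt (fun t => jointTrace hA hB (F t)) (jointTrace hA hB F') t :=
  .fun_sum fun i _ => .fun_sum fun j _ => (h i j).const_mul _

end Hermitian

section PosSemidef

variable {n : Type*} [Fintype n] {A B : Matrix n n ℂ}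

open scoped MatrixOrder in
theorem exists_eq_conjTranspose_mul_self (hA : A.PosSemidef) : ∃ X : Matrix n n ℂ, A = Xᴴ * X := by
  classical
  exact CStarAlgebra.nonneg_iff_eq_star_mul_self.mp hA.nonneg

theorem trace_mul_nonneg (hA : A.PosSemidef) (hB : B.PosSemidef) : 0 ≤ trace (A * B) := by
  obtain ⟨X, rfl⟩ := exists_eq_conjTranspose_mul_self hA
  rw [mul_assoc, trace_mul_comm]
  exact (hB.mul_mul_conjTranspose_same X).trace_nonneg

theorem mul_eq_zero_of_trace_mul_eq_zero (hA : A.PosSemidef) (hB : B.PosSemidef)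
    (h : trace (A * B) = 0) : A * B = 0 := by
  obtain ⟨X, rfl⟩ := exists_eq_conjTranspose_mul_self hA
  obtain ⟨Y, rfl⟩ := exists_eq_conjTranspose_mul_self hB
  have hXY : X * Yᴴ = 0 := by
    rw [← trace_mul_conjTranspose_self_eq_zero_iff, ← h, mul_assoc Xᴴ, trace_mul_comm Xᴴ]
    simp [mul_assoc]
  rw [mul_assoc, ← mul_assoc X, hXY, zero_mul, mul_zero]

theorem posSemidef_of_trace_mul_nonneg (h : ∀ D : Matrix n n ℂ, D.PosSemidef → 0 ≤ trace (A * D)) :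
    A.PosSemidef := by
  classical
  rw [← isPositive_toEuclideanLin_iff, LinearMap.isPositive_iff_complex]
  intro x
  have hx : 0 ≤ inner ℂ (A.toEuclideanLin x) x := by
    rw [← inner_conj_symm, ← RCLike.star_def, star_nonneg_iff]
    simpa [mul_vecMulVec, trace_vecMulVec, EuclideanSpace.inner_eq_star_dotProduct] using
      h _ (posSemidef_vecMulVec_self_star x.ofLp)
  exact ⟨Complex.ext rfl (Complex.nonneg_iff.mp hx).2, (Complex.nonneg_iff.mp hx).1⟩

theorem mul_eq_zero_of_ker_le (hAB : LinearMap.ker B.mulVecLin ≤ LinearMap.ker A.mulVecLin)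
    {X : Matrix n n ℂ} (hX : B * X = 0) : A * X = 0 := by
  ext i j
  have hcol : B *ᵥ X.col j = 0 := funext fun k => congrFun (congrFun hX k) j
  exact congrFun (hAB hcol) i

end PosSemidef

section QuadForm

variable {n : Type*} [Fintype n] {A B : Matrix n n ℂ}

/-- The real quadratic function of `Z` whose maximum is `⟨A, (L_B + t R_A)⁻¹ A⟩`, where `L_B` and
`R_A` are left multiplication by `B` and right multiplication by `A`. -/
noncomputable def quadForm (A B : Matrix n n ℂ) (t : ℝ) (Z : Matrix n n ℂ) : ℝ :=
  2 * (trace (A * Zᴴ)).re - (trace (B * (Z * Zᴴ))).re - t * (trace (A * (Zᴴ * Z))).re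

variable [DecidableEq n]

theorem quadForm_eq_sum (hA : A.IsHermitian) (hB : B.IsHermitian) (t : ℝ) (Z : Matrix n n ℂ) :
    quadForm A B t Z = ∑ i, ∑ j,
      (2 * hA.eigenvalues i * (star (eigenCoords hA hB Z j i) * eigenCoords hA hB 1 j i).re -
        (hB.eigenvalues j + t * hA.eigenvalues i) * Complex.normSq (eigenCoords hA hB Z j i)) := by
  have hAZ := trace_cfc_mul_conjTranspose_mul_cfc_mul hA hB (fun x => x) (fun _ => 1) Z 1
  have hBZZ := trace_cfc_mul_conjTranspose_mul_cfc_mul hA hB (fun _ => 1) (fun y => y) Z Z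
  have hAZZ := trace_cfc_mul_conjTranspose_mul_cfc_mul hA hB (fun x => x) (fun _ => 1) Z Z
  rw [cfc_id' ℝ A hA.isSelfAdjoint, cfc_const_one ℝ B, mul_one, mul_one] at hAZ
  rw [cfc_const_one ℝ A, cfc_id' ℝ B hB.isSelfAdjoint, one_mul, ← trace_mul_cycle,
    mul_assoc] at hBZZ
  rw [cfc_id' ℝ A hA.isSelfAdjoint, cfc_const_one ℝ B, mul_one, mul_assoc] at hAZZ
  simp only [quadForm, hAZ, hBZZ, hAZZ, Complex.re_sum, Finset.mul_sum, ← Finset.sum_sub_distrib]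
  refine Finset.sum_congr rfl fun i _ => Finset.sum_congr rfl fun j _ => ?_
  rw [Complex.star_def, ← Complex.normSq_eq_conj_mul_self]
  simp only [mul_assoc, Complex.re_ofReal_mul, Complex.ofReal_re, Complex.ofReal_one, one_mul]
  ring

theorem complete_square_normSq (c z : ℂ) {a q : ℝ} (hq : q = 0 → a = 0) :
    2 * a * (star z * c).re - q * Complex.normSq z =
      Complex.normSq c * (a * (a / q)) - q * Complex.normSq (z - (a / q : ℝ) * c) := by
  obtain rfl | hq₀ := eq_or_ne q 0
  · simp [hq rfl]
  · simp only [Complex.normSq_apply, Complex.star_def, Complex.mul_re, Complex.mul_im,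
      Complex.sub_re, Complex.sub_im, Complex.conj_re, Complex.conj_im, Complex.ofReal_re,
      Complex.ofReal_im]
    field_simp
    ring

theorem quadForm_eq_jointTrace_sub (hA : A.PosSemidef) (hB : B.PosSemidef) {t : ℝ} (ht : 0 < t)
    (Z : Matrix n n ℂ) :
    quadForm A B t Z = jointTrace hA.1 hB.1 (fun x y => x * (x / (y + t * x))) -
      ∑ i, ∑ j, (hB.1.eigenvalues j + t * hA.1.eigenvalues i) *
        Complex.normSq (eigenCoords hA.1 hB.1 Z j i -
          (hA.1.eigenvalues i / (hB.1.eigenvalues j + t * hA.1.eigenvalues i) : ℝ) *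
            eigenCoords hA.1 hB.1 1 j i) := by
  simp only [quadForm_eq_sum hA.1 hB.1, jointTrace, ← Finset.sum_sub_distrib]
  refine Finset.sum_congr rfl fun i _ => Finset.sum_congr rfl fun j _ =>
    complete_square_normSq _ _ fun hq => ?_
  have ha := hA.eigenvalues_nonneg i
  have hb := hB.eigenvalues_nonneg j
  nlinarith

theorem isGreatest_range_quadForm (hA : A.PosSemidef) (hB : B.PosSemidef) {t : ℝ} (ht : 0 < t) :
    IsGreatest (Set.range (quadForm A B t))
      (jointTrace hA.1 hB.1 fun x y => x * (x / (y + t * x))) := by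
  constructor
  · obtain ⟨Z, hZ⟩ := exists_eigenCoords_eq hA.1 hB.1 (of fun j i =>
      ((hA.1.eigenvalues i / (hB.1.eigenvalues j + t * hA.1.eigenvalues i) : ℝ) : ℂ) *
        eigenCoords hA.1 hB.1 1 j i)
    exact ⟨Z, by simp [quadForm_eq_jointTrace_sub hA hB ht, hZ]⟩
  · rintro _ ⟨Z, rfl⟩
    rw [quadForm_eq_jointTrace_sub hA hB ht]
    refine sub_le_self _ (Finset.sum_nonneg fun i _ => Finset.sum_nonneg fun j _ => ?_)
    have ha := hA.eigenvalues_nonneg i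
    have hb := hB.eigenvalues_nonneg j
    exact mul_nonneg (by positivity) (Complex.normSq_nonneg _)

end QuadForm

section Schwarz

variable {N m ι : Type*} [Fintype N] [Fintype m]
  {A B : Matrix N N ℂ} {A' B' : ι → Matrix m m ℂ} {Φ : (ι → Matrix m m ℂ) → Matrix N N ℂ}

/-- `A'` is the image of `A` under the predual of `Φ`. -/
def IsTraceDual [Fintype ι] (Φ : (ι → Matrix m m ℂ) → Matrix N N ℂ) (A : Matrix N N ℂ)
    (A' : ι → Matrix m m ℂ) : Prop :=
  ∀ Y, ∑ α, trace (A' α * Y α) = trace (A * Φ Y)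

theorem IsTraceDual.trace_mul_single [Fintype ι] [DecidableEq ι] (hA : IsTraceDual Φ A A') (α : ι)
    (D : Matrix m m ℂ) : trace (A' α * D) = trace (A * Φ (Pi.single α D)) := by
  rw [← hA, Finset.sum_eq_single α (fun β _ hβ => by simp [hβ]) (by simp), Pi.single_eq_same]

variable [DecidableEq N] [DecidableEq m]

/-- `Φ` is unital, commutes with the adjoint and satisfies the Kadison–Schwarz inequality
`Φ(Y)* Φ(Y) ≤ Φ(Y* Y)`. The family `Y` stands for the block-diagonal matrix with blocks `Y α`. -/
structure IsUnitalSchwarz (Φ : (ι → Matrix m m ℂ) → Matrix N N ℂ) : Prop where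
  map_one : Φ 1 = 1
  map_star (Y : ι → Matrix m m ℂ) : Φ (star Y) = (Φ Y)ᴴ
  posSemidef (Y : ι → Matrix m m ℂ) : (Φ (star Y * Y) - (Φ Y)ᴴ * Φ Y).PosSemidef

theorem IsUnitalSchwarz.map_star_mul_self_posSemidef (hΦ : IsUnitalSchwarz Φ)
    (Y : ι → Matrix m m ℂ) : (Φ (star Y * Y)).PosSemidef := by
  simpa using (hΦ.posSemidef Y).add (posSemidef_conjTranspose_mul_self (Φ Y))

theorem IsUnitalSchwarz.map_single_posSemidef [DecidableEq ι] (hΦ : IsUnitalSchwarz Φ) (α : ι)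
    {D : Matrix m m ℂ} (hD : D.PosSemidef) : (Φ (Pi.single α D)).PosSemidef := by
  obtain ⟨X, rfl⟩ := exists_eq_conjTranspose_mul_self hD
  have h := hΦ.map_star_mul_self_posSemidef (Pi.single α X)
  rwa [← Pi.single_star, ← Pi.single_mul] at h

variable [Fintype ι]

theorem IsTraceDual.sum_trace (hΦ : IsUnitalSchwarz Φ) (hA : IsTraceDual Φ A A') :
    ∑ α, trace (A' α) = trace A := by
  simpa [hΦ.map_one] using hA 1

theorem IsTraceDual.posSemidef (hΦ : IsUnitalSchwarz Φ) (hA : IsTraceDual Φ A A')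
    (hA₀ : A.PosSemidef) (α : ι) : (A' α).PosSemidef := by
  classical
  refine posSemidef_of_trace_mul_nonneg fun D hD => ?_
  rw [hA.trace_mul_single]
  exact trace_mul_nonneg hA₀ (hΦ.map_single_posSemidef α hD)

theorem IsTraceDual.ker_le (hΦ : IsUnitalSchwarz Φ) (hA : IsTraceDual Φ A A')
    (hB : IsTraceDual Φ B B') (hA₀ : A.PosSemidef) (hB₀ : B.PosSemidef)
    (hAB : LinearMap.ker B.mulVecLin ≤ LinearMap.ker A.mulVecLin) (α : ι) :
    LinearMap.ker (B' α).mulVecLin ≤ LinearMap.ker (A' α).mulVecLin := by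
  classical
  intro x hx
  have hpos := hΦ.map_single_posSemidef α (posSemidef_vecMulVec_self_star x)
  have hBx : B * Φ (Pi.single α (vecMulVec x (star x))) = 0 := by
    refine mul_eq_zero_of_trace_mul_eq_zero hB₀ hpos ?_
    rw [← hB.trace_mul_single, mul_vecMulVec, show B' α *ᵥ x = 0 from hx, zero_vecMulVec,
      trace_zero]
  have htr : trace (A' α * vecMulVec x (star x)) = 0 := by
    rw [hA.trace_mul_single, mul_eq_zero_of_ker_le hAB hBx, trace_zero]
  refine ((hA.posSemidef hΦ hA₀ α).dotProduct_mulVec_zero_iff x).mp ?_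
  rwa [mul_vecMulVec, trace_vecMulVec, dotProduct_comm] at htr

theorem sum_quadForm_le (hΦ : IsUnitalSchwarz Φ) (hA : IsTraceDual Φ A A')
    (hB : IsTraceDual Φ B B') (hA₀ : A.PosSemidef) (hB₀ : B.PosSemidef) {t : ℝ} (ht : 0 ≤ t)
    (Y : ι → Matrix m m ℂ) :
    ∑ α, quadForm (A' α) (B' α) t (Y α) ≤ quadForm A B t (Φ Y) := by
  have hAY : ∑ α, (trace (A' α * (Y α)ᴴ)).re = (trace (A * (Φ Y)ᴴ)).re := by
    rw [← hΦ.map_star, ← hA, Complex.re_sum]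
    rfl
  have hBYY : (trace (B * (Φ Y * (Φ Y)ᴴ))).re ≤ ∑ α, (trace (B' α * (Y α * (Y α)ᴴ))).re := by
    have h := (Complex.nonneg_iff.mp (trace_mul_nonneg hB₀ (hΦ.posSemidef (star Y)))).1
    rw [star_star, hΦ.map_star, conjTranspose_conjTranspose, mul_sub, trace_sub, ← hB,
      Complex.sub_re, Complex.re_sum] at h
    exact sub_nonneg.mp h
  have hAYY : (trace (A * ((Φ Y)ᴴ * Φ Y))).re ≤ ∑ α, (trace (A' α * ((Y α)ᴴ * Y α))).re := by
    have h := (Complex.nonneg_iff.mp (trace_mul_nonneg hA₀ (hΦ.posSemidef Y))).1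
    rw [mul_sub, trace_sub, ← hA, Complex.sub_re, Complex.re_sum] at h
    exact sub_nonneg.mp h
  simp only [quadForm, Finset.sum_sub_distrib, ← Finset.mul_sum, hAY]
  gcongr

theorem sum_jointTrace_le (hΦ : IsUnitalSchwarz Φ) (hA : IsTraceDual Φ A A')
    (hB : IsTraceDual Φ B B') (hA₀ : A.PosSemidef) (hB₀ : B.PosSemidef) {t : ℝ} (ht : 0 < t) :
    ∑ α, jointTrace (hA.posSemidef hΦ hA₀ α).1 (hB.posSemidef hΦ hB₀ α).1
        (fun x y => x * (x / (y + t * x))) ≤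
      jointTrace hA₀.1 hB₀.1 fun x y => x * (x / (y + t * x)) := by
  choose Y hY using fun α => (isGreatest_range_quadForm (hA.posSemidef hΦ hA₀ α)
    (hB.posSemidef hΦ hB₀ α) ht).1
  simp only [← hY]
  exact (sum_quadForm_le hΦ hA hB hA₀ hB₀ ht.le Y).trans
    ((isGreatest_range_quadForm hA₀ hB₀ ht).2 ⟨_, rfl⟩)

end Schwarz

section RelEntropy

variable {n : Type*} [Fintype n] [DecidableEq n] {A B : Matrix n n ℂ}

/-- The relative entropy `D(A‖B) = Tr A (log A - log B)`. As `Real.log 0 = 0`, this is the usual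
notion only when the kernel of `B` is contained in that of `A`. -/
noncomputable def relEntropy (A B : Matrix n n ℂ) : ℝ :=
  (trace (A * (cfc Real.log A - cfc Real.log B))).re

theorem jointTrace_mul_log_sub_eq_relEntropy (hA : A.IsHermitian) (hB : B.IsHermitian) :
    jointTrace hA hB (fun x y => x * Real.log x - x * Real.log y) = relEntropy A B := by
  rw [jointTrace_sub, jointTrace_fst, jointTrace_mul hA hB (fun x => x) Real.log,
    ← mul_cfc_self hA, cfc_id' ℝ A hA.isSelfAdjoint, relEntropy, mul_sub, trace_sub, Complex.sub_re]

theorem eigenvalues_eq_zero_of_ker_le (hA : A.IsHermitian) (hB : B.IsHermitian)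
    (hAB : LinearMap.ker B.mulVecLin ≤ LinearMap.ker A.mulVecLin) {i j : n}
    (hij : eigenCoords hA hB 1 j i ≠ 0) (hj : hB.eigenvalues j = 0) : hA.eigenvalues i = 0 := by
  have hBv : B *ᵥ hB.eigenvectorBasis j = 0 := by simp [hB.mulVec_eigenvectorBasis, hj]
  have hAv : A *ᵥ hB.eigenvectorBasis j = 0 := hAB hBv
  have hvA : star (hB.eigenvectorBasis j).ofLp ᵥ* A = 0 := by
    rw [← hA.eq, ← star_mulVec, hAv, star_zero]
  have hcoord : eigenCoords hA hB 1 j i =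
      star (hB.eigenvectorBasis j).ofLp ⬝ᵥ (hA.eigenvectorBasis i).ofLp := by
    rw [eigenCoords, mul_one]
    rfl
  have hmul : (hA.eigenvalues i : ℂ) * eigenCoords hA hB 1 j i = 0 := by
    rw [hcoord, ← smul_eq_mul, ← dotProduct_smul, Complex.coe_smul, ← hA.mulVec_eigenvectorBasis,
      dotProduct_mulVec, hvA, zero_dotProduct]
  exact_mod_cast (mul_eq_zero.mp hmul).resolve_right hij

theorem hasDerivAt_mul_log_add {x y t : ℝ} (hx : 0 ≤ x) (hy : 0 ≤ y) (ht : 0 < t) :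
    HasDerivAt (fun t => x * Real.log (y + t * x)) (x * (x / (y + t * x))) t := by
  obtain rfl | hx := hx.eq_or_lt
  · simp [hasDerivAt_const]
  · have hlin : HasDerivAt (fun t => y + t * x) x t := by
      simpa using ((hasDerivAt_id t).mul_const x).const_add y
    exact (hlin.log (by positivity)).const_mul x

theorem hasDerivAt_jointTrace_log (hA : A.PosSemidef) (hB : B.PosSemidef) {t : ℝ} (ht : 0 < t) :
    HasDerivAt (fun t => jointTrace hA.1 hB.1 fun x y => x * Real.log (y + t * x))
      (jointTrace hA.1 hB.1 fun x y => x * (x / (y + t * x))) t :=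
  hasDerivAt_jointTrace hA.1 hB.1 fun i j =>
    hasDerivAt_mul_log_add (hA.eigenvalues_nonneg i) (hB.eigenvalues_nonneg j) ht

theorem tendsto_mul_log_add_nhdsGT_zero {x y : ℝ} (hxy : y = 0 → x = 0) :
    Tendsto (fun t => x * Real.log (y + t * x)) (𝓝[>] 0) (𝓝 (x * Real.log y)) := by
  obtain rfl | hy := eq_or_ne y 0
  · simp [hxy rfl]
  · have hlin : Tendsto (fun t => y + t * x) (𝓝[>] 0) (𝓝 y) :=
      tendsto_nhdsWithin_of_tendsto_nhds (Continuous.tendsto' (by fun_prop) _ _ (by simp))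
    exact (hlin.log hy).const_mul x

theorem tendsto_mul_log_add_inv_nhdsGT_zero {x y : ℝ} (hx : 0 ≤ x) (hy : 0 ≤ y) :
    Tendsto (fun t => x * Real.log (y + t⁻¹ * x) + x * Real.log t) (𝓝[>] 0)
      (𝓝 (x * Real.log x)) := by
  obtain rfl | hx := hx.eq_or_lt
  · simp
  · have hlin : Tendsto (fun t => t * y + x) (𝓝[>] 0) (𝓝 x) :=
      tendsto_nhdsWithin_of_tendsto_nhds (Continuous.tendsto' (by fun_prop) _ _ (by simp))
    refine ((hlin.log hx.ne').const_mul x).congr' ?_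
    filter_upwards [self_mem_nhdsWithin] with t (ht : 0 < t)
    rw [← mul_add, ← Real.log_mul (by positivity) ht.ne']
    congr 2
    field_simp

theorem tendsto_relEntropy (hA : A.PosSemidef) (hB : B.PosSemidef)
    (hAB : LinearMap.ker B.mulVecLin ≤ LinearMap.ker A.mulVecLin) :
    Tendsto (fun t => jointTrace hA.1 hB.1 (fun x y => x * Real.log (y + t⁻¹ * x)) -
        jointTrace hA.1 hB.1 (fun x y => x * Real.log (y + t * x)) +
        (trace A).re * Real.log t) (𝓝[>] 0) (𝓝 (relEntropy A B)) := by
  have hlim := tendsto_jointTrace hA.1 hB.1 (l := 𝓝[>] 0)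
    (F := fun t x y => x * Real.log (y + t⁻¹ * x) + x * Real.log t - x * Real.log (y + t * x))
    (f := fun x y => x * Real.log x - x * Real.log y) fun i j hij =>
      (tendsto_mul_log_add_inv_nhdsGT_zero (hA.eigenvalues_nonneg i)
        (hB.eigenvalues_nonneg j)).sub
      (tendsto_mul_log_add_nhdsGT_zero (eigenvalues_eq_zero_of_ker_le hA.1 hB.1 hAB hij))
  rw [jointTrace_mul_log_sub_eq_relEntropy] at hlim
  refine hlim.congr fun t => ?_
  rw [jointTrace_sub, jointTrace_add, jointTrace_fst_mul_const]
  ring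

end RelEntropy

section DataProcessing

variable {N m ι : Type*} [Fintype N] [DecidableEq N] [Fintype m] [DecidableEq m] [Fintype ι]
  {A B : Matrix N N ℂ} {A' B' : ι → Matrix m m ℂ} {Φ : (ι → Matrix m m ℂ) → Matrix N N ℂ}

theorem sum_jointTrace_log_sub_le (hΦ : IsUnitalSchwarz Φ) (hA : IsTraceDual Φ A A')
    (hB : IsTraceDual Φ B B') (hA₀ : A.PosSemidef) (hB₀ : B.PosSemidef) {s t : ℝ} (hs : 0 < s)
    (hst : s ≤ t) :
    ∑ α, (jointTrace (hA.posSemidef hΦ hA₀ α).1 (hB.posSemidef hΦ hB₀ α).1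
          (fun x y => x * Real.log (y + t * x)) -
        jointTrace (hA.posSemidef hΦ hA₀ α).1 (hB.posSemidef hΦ hB₀ α).1
          (fun x y => x * Real.log (y + s * x))) ≤
      jointTrace hA₀.1 hB₀.1 (fun x y => x * Real.log (y + t * x)) -
        jointTrace hA₀.1 hB₀.1 (fun x y => x * Real.log (y + s * x)) := by
  have hA₁ := hA.posSemidef hΦ hA₀
  have hB₁ := hB.posSemidef hΦ hB₀
  let G (t : ℝ) : ℝ := jointTrace hA₀.1 hB₀.1 (fun x y => x * Real.log (y + t * x)) -
    ∑ α, jointTrace (hA₁ α).1 (hB₁ α).1 (fun x y => x * Real.log (y + t * x))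
  have hderiv (t : ℝ) (ht : 0 < t) : HasDerivAt G
      (jointTrace hA₀.1 hB₀.1 (fun x y => x * (x / (y + t * x))) -
        ∑ α, jointTrace (hA₁ α).1 (hB₁ α).1 (fun x y => x * (x / (y + t * x)))) t :=
    (hasDerivAt_jointTrace_log hA₀ hB₀ ht).sub
      (.fun_sum fun α _ => hasDerivAt_jointTrace_log (hA₁ α) (hB₁ α) ht)
  have hmono : MonotoneOn G (Set.Ioi 0) :=
    monotoneOn_of_hasDerivWithinAt_nonneg (convex_Ioi 0)
      (fun t ht => (hderiv t ht).continuousAt.continuousWithinAt)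
      (fun t ht => (hderiv t (interior_subset ht)).hasDerivWithinAt)
      (fun t ht => sub_nonneg.mpr (sum_jointTrace_le hΦ hA hB hA₀ hB₀ (interior_subset ht)))
  have h := hmono hs (hs.trans_le hst) hst
  simp only [G] at h
  rw [Finset.sum_sub_distrib]
  linarith

theorem sum_relEntropy_le (hΦ : IsUnitalSchwarz Φ) (hA : IsTraceDual Φ A A')
    (hB : IsTraceDual Φ B B') (hA₀ : A.PosSemidef) (hB₀ : B.PosSemidef)
    (hAB : LinearMap.ker B.mulVecLin ≤ LinearMap.ker A.mulVecLin) :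
    ∑ α, relEntropy (A' α) (B' α) ≤ relEntropy A B := by
  refine le_of_tendsto_of_tendsto
    (tendsto_finsetSum _ fun α _ => tendsto_relEntropy (hA.posSemidef hΦ hA₀ α)
      (hB.posSemidef hΦ hB₀ α) (hA.ker_le hΦ hB hA₀ hB₀ hAB α))
    (tendsto_relEntropy hA₀ hB₀ hAB) ?_
  filter_upwards [Ioc_mem_nhdsGT zero_lt_one] with t ht
  rw [Finset.sum_add_distrib, ← Finset.sum_mul, ← Complex.re_sum, hA.sum_trace hΦ]
  gcongr
  exact sum_jointTrace_log_sub_le hΦ hA hB hA₀ hB₀ ht.1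
    (ht.2.trans ((one_le_inv₀ ht.1).mpr ht.2))

end DataProcessing

section Measurement

variable {N m ι : Type*} [Fintype N] [DecidableEq N] [Fintype m] [DecidableEq m] [Fintype ι]

/-- The dual of the channel that measures `P` and keeps, for each outcome, the state of the
subsystem whose observables are embedded by `E`. -/
def measureMap (P : ι → Matrix N N ℂ) (E : Matrix m m ℂ →⋆ₐ[ℂ] Matrix N N ℂ)
    (Y : ι → Matrix m m ℂ) : Matrix N N ℂ :=
  ∑ α, P α * E (Y α)

theorem measureMap_star {P : ι → Matrix N N ℂ} {E : Matrix m m ℂ →⋆ₐ[ℂ] Matrix N N ℂ}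
    (hP : ∀ α, (P α).IsHermitian) (hcomm : ∀ α Y, P α * E Y = E Y * P α) (Y : ι → Matrix m m ℂ) :
    measureMap P E (star Y) = (measureMap P E Y)ᴴ := by
  rw [measureMap, measureMap, conjTranspose_sum]
  refine Finset.sum_congr rfl fun α _ => ?_
  rw [conjTranspose_mul, (hP α).eq, Pi.star_apply, hcomm, map_star, star_eq_conjTranspose]

theorem measureMap_star_mul_self_sub {P : ι → Matrix N N ℂ}
    {E : Matrix m m ℂ →⋆ₐ[ℂ] Matrix N N ℂ} (hP : ∀ α, (P α).IsHermitian) (hPsum : ∑ α, P α = 1)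
    (hcomm : ∀ α Y, P α * E Y = E Y * P α) (Y : ι → Matrix m m ℂ) :
    measureMap P E (star Y * Y) - (measureMap P E Y)ᴴ * measureMap P E Y =
      ∑ α, (E (Y α) - measureMap P E Y)ᴴ * P α * (E (Y α) - measureMap P E Y) := by
  set Z := measureMap P E Y with hZ
  have hZstar : ∑ α, (E (Y α))ᴴ * P α = Zᴴ := by
    simp only [hZ, measureMap, conjTranspose_sum, conjTranspose_mul, (hP _).eq]
  have hcommstar (α : ι) : P α * (E (Y α))ᴴ = (E (Y α))ᴴ * P α := by
    rw [← star_eq_conjTranspose, ← map_star, hcomm]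
  have hterm (α : ι) : (E (Y α) - Z)ᴴ * P α * (E (Y α) - Z) =
      P α * E (star (Y α) * Y α) - (E (Y α))ᴴ * P α * Z - Zᴴ * (P α * E (Y α)) +
        Zᴴ * P α * Z := by
    rw [map_mul, map_star, star_eq_conjTranspose (E _), ← mul_assoc (P α), hcommstar,
      conjTranspose_sub]
    noncomm_ring
  simp only [hterm, Finset.sum_add_distrib, Finset.sum_sub_distrib, ← Finset.sum_mul,
    ← Finset.mul_sum, hPsum, hZstar, mul_one]
  rw [show ∑ α, P α * E (Y α) = Z from rfl, sub_add_cancel]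
  rfl

theorem isUnitalSchwarz_measureMap {P : ι → Matrix N N ℂ} {E : Matrix m m ℂ →⋆ₐ[ℂ] Matrix N N ℂ}
    (hP : ∀ α, (P α).PosSemidef) (hPsum : ∑ α, P α = 1)
    (hcomm : ∀ α Y, P α * E Y = E Y * P α) : IsUnitalSchwarz (measureMap P E) where
  map_one := by simp [measureMap, hPsum]
  map_star := measureMap_star (fun α => (hP α).1) hcomm
  posSemidef Y := by
    rw [measureMap_star_mul_self_sub (fun α => (hP α).1) hPsum hcomm]
    exact posSemidef_sum _ fun α _ => (hP α).conjTranspose_mul_mul_same _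

end Measurement

section PartialTrace

theorem trace_ptraceSnd_mul {m k : Type*} [Fintype m] [Fintype k] [DecidableEq k]
    (ρ : Matrix (m × k) (m × k) ℂ) (C : Matrix m m ℂ) :
    trace (ptraceSnd ρ * C) = trace (ρ * (C ⊗ₖ (1 : Matrix k k ℂ))) := by
  simp only [trace, diag_apply, mul_apply, ptraceSnd, of_apply, Fintype.sum_prod_type,
    kroneckerMap_apply, one_apply, mul_ite, mul_one, mul_zero, Finset.sum_ite_eq',
    Finset.mem_univ, if_true, Finset.sum_mul]
  exact Finset.sum_congr rfl fun i _ => Finset.sum_comm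

theorem trace_ptraceFst_mul {m k : Type*} [Fintype m] [DecidableEq m] [Fintype k]
    (ρ : Matrix (m × k) (m × k) ℂ) (C : Matrix k k ℂ) :
    trace (ptraceFst ρ * C) = trace (ρ * ((1 : Matrix m m ℂ) ⊗ₖ C)) := by
  simp only [trace, diag_apply, mul_apply, ptraceFst, of_apply, Fintype.sum_prod_type_right,
    kroneckerMap_apply, one_apply, ite_mul, one_mul, zero_mul, mul_ite, mul_zero,
    Finset.sum_ite_eq', Finset.mem_univ, if_true, Finset.sum_mul]
  exact Finset.sum_congr rfl fun i _ => Finset.sum_comm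

theorem ptraceSnd_kronecker_one_mul {m k : Type*} [Fintype m] [Fintype k] [DecidableEq k]
    (C : Matrix m m ℂ) (ρ : Matrix (m × k) (m × k) ℂ) :
    ptraceSnd ((C ⊗ₖ (1 : Matrix k k ℂ)) * ρ) = C * ptraceSnd ρ := by
  ext i j
  simp only [ptraceSnd, of_apply, mul_apply, Fintype.sum_prod_type, kroneckerMap_apply, one_apply,
    mul_ite, mul_one, mul_zero, ite_mul, zero_mul, Finset.sum_ite_eq, Finset.mem_univ, if_true,
    Finset.mul_sum]
  exact Finset.sum_comm

theorem ptraceSnd_posSemidef {m k : Type*} [Fintype k] {ρ : Matrix (m × k) (m × k) ℂ}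
    (hρ : ρ.PosSemidef) : (ptraceSnd ρ).PosSemidef := by
  have hsum : ptraceSnd ρ = ∑ i, ρ.submatrix (fun j => (j, i)) (fun j => (j, i)) := by
    ext
    simp [ptraceSnd, Matrix.sum_apply]
  rw [hsum]
  exact posSemidef_sum _ fun i _ => hρ.submatrix _

theorem ptraceSnd_ptraceFst₃ {a b c : Type*} [Fintype a] [Fintype c]
    (ρ : Matrix ((a × b) × c) ((a × b) × c) ℂ) :
    ptraceSnd (ptraceFst₃ ρ) = ptraceFst (ptraceSnd ρ) := by
  ext i j
  exact Finset.sum_comm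

theorem ptraceFst₃_eq_ptraceFst_submatrix {a b c : Type*} [Fintype a]
    (ρ : Matrix ((a × b) × c) ((a × b) × c) ℂ) :
    ptraceFst₃ ρ =
      ptraceFst (ρ.submatrix (Equiv.prodAssoc a b c).symm (Equiv.prodAssoc a b c).symm) :=
  rfl

theorem ptraceFst₃_kronecker {a b c : Type*} [Fintype a] (X : Matrix (a × b) (a × b) ℂ)
    (Y : Matrix c c ℂ) : ptraceFst₃ (X ⊗ₖ Y) = ptraceFst X ⊗ₖ Y := by
  ext
  simp [ptraceFst₃, ptraceFst, Finset.sum_mul]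

end PartialTrace

section Ampliation

theorem sum_kronecker_one {m k ι : Type*} [DecidableEq k] [Fintype ι] (C : ι → Matrix m m ℂ) :
    ∑ α, C α ⊗ₖ (1 : Matrix k k ℂ) = (∑ α, C α) ⊗ₖ (1 : Matrix k k ℂ) := by
  ext
  simp [Matrix.sum_apply, Finset.sum_mul]

variable {m k : Type*} [Fintype m] [DecidableEq m] [Fintype k] [DecidableEq k]

/-- The ampliation `C ↦ C ⊗ 1` as a homomorphism of star algebras. -/
def kroneckerOne (m k : Type*) [Fintype m] [DecidableEq m] [Fintype k] [DecidableEq k] :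
    Matrix m m ℂ →⋆ₐ[ℂ] Matrix (m × k) (m × k) ℂ where
  toFun C := C ⊗ₖ (1 : Matrix k k ℂ)
  map_one' := one_kronecker_one
  map_mul' C D := by rw [← mul_kronecker_mul, mul_one]
  map_zero' := zero_kronecker _
  map_add' C D := add_kronecker C D _
  commutes' r := by simp only [Algebra.algebraMap_eq_smul_one, smul_kronecker, one_kronecker_one]
  map_star' C := by simp only [star_eq_conjTranspose, conjTranspose_kronecker, conjTranspose_one]

theorem cfc_kronecker_one {B : Matrix m m ℂ} (hB : B.IsHermitian) (f : ℝ → ℝ) :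
    cfc f (B ⊗ₖ (1 : Matrix k k ℂ)) = cfc f B ⊗ₖ (1 : Matrix k k ℂ) :=
  (StarAlgHom.map_cfc (kroneckerOne m k) f B (continuousOn_spectrum_real B f)
    (LinearMap.continuous_of_finiteDimensional (kroneckerOne m k).toAlgHom.toLinearMap)
    hB.isSelfAdjoint (hB.isSelfAdjoint.map (kroneckerOne m k))).symm

theorem relEntropy_ptraceSnd_kronecker_one {ρ : Matrix (m × k) (m × k) ℂ} (hρ : ρ.PosSemidef) :
    relEntropy ρ (ptraceSnd ρ ⊗ₖ (1 : Matrix k k ℂ)) = entropy (ptraceSnd ρ) - entropy ρ := by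
  have hσ := (ptraceSnd_posSemidef hρ).1
  rw [relEntropy, cfc_kronecker_one hσ, mul_sub, trace_sub, ← trace_ptraceSnd_mul, Complex.sub_re,
    entropy_eq_neg_trace_mul_cfc_log hσ, entropy_eq_neg_trace_mul_cfc_log hρ.1]
  ring

open scoped MatrixOrder in
theorem exists_kernel_projection {B : Matrix m m ℂ} (hB : B.IsHermitian) :
    ∃ C : Matrix m m ℂ, B * (1 - C * B) = 0 ∧ (1 - C * B).PosSemidef := by
  have hproj : 1 - cfc (fun x : ℝ => x⁻¹) B * B = cfc (fun x : ℝ => 1 - x⁻¹ * x) B := by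
    rw [cfc_sub _ _ B (hg := continuousOn_spectrum_real B _), cfc_const_one ℝ B,
      cfc_mul _ _ B (continuousOn_spectrum_real B _), cfc_id' ℝ B hB.isSelfAdjoint]
  refine ⟨cfc (fun x : ℝ => x⁻¹) B, ?_, ?_⟩
  · have hzero (x : ℝ) : x * (1 - x⁻¹ * x) = 0 := by
      rw [mul_sub, mul_one, ← mul_assoc, mul_inv_mul_cancel, sub_self]
    rw [hproj, mul_cfc_self hB]
    simp only [hzero, cfc_const_zero]
  · rw [hproj, ← nonneg_iff_posSemidef]
    exact cfc_nonneg fun x _ => sub_nonneg.mpr inv_mul_le_one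

end Ampliation

theorem ker_ptraceSnd_kronecker_one_le {m k : Type*} [Fintype m] [Fintype k] [DecidableEq k]
    {ρ : Matrix (m × k) (m × k) ℂ} (hρ : ρ.PosSemidef) :
    LinearMap.ker (ptraceSnd ρ ⊗ₖ (1 : Matrix k k ℂ)).mulVecLin ≤ LinearMap.ker ρ.mulVecLin := by
  classical
  obtain ⟨C, hmul, hpos⟩ := exists_kernel_projection (ptraceSnd_posSemidef hρ).1
  have hρmul : ρ * ((1 - C * ptraceSnd ρ) ⊗ₖ (1 : Matrix k k ℂ)) = 0 := by
    refine mul_eq_zero_of_trace_mul_eq_zero hρ (hpos.kronecker .one) ?_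
    rw [← trace_ptraceSnd_mul, hmul, trace_zero]
  have hproj : (1 - C * ptraceSnd ρ) ⊗ₖ (1 : Matrix k k ℂ) =
      1 - (C ⊗ₖ (1 : Matrix k k ℂ)) * (ptraceSnd ρ ⊗ₖ (1 : Matrix k k ℂ)) := by
    rw [← mul_kronecker_mul, mul_one, eq_sub_iff_add_eq, ← add_kronecker, sub_add_cancel,
      one_kronecker_one]
  intro v hv
  have hv₀ : (ptraceSnd ρ ⊗ₖ (1 : Matrix k k ℂ)) *ᵥ v = 0 := hv
  have h : ρ *ᵥ (((1 - C * ptraceSnd ρ) ⊗ₖ (1 : Matrix k k ℂ)) *ᵥ v) = 0 := by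
    rw [mulVec_mulVec, hρmul, zero_mulVec]
  rwa [hproj, sub_mulVec, one_mulVec, ← mulVec_mulVec, hv₀, mulVec_zero, sub_zero] at h

section Tripartite

theorem kronecker_one_one_eq_submatrix {n₁ n₂ n₃ : Type*} [DecidableEq n₂] [DecidableEq n₃]
    (P : Matrix n₁ n₁ ℂ) :
    (P ⊗ₖ (1 : Matrix n₂ n₂ ℂ)) ⊗ₖ (1 : Matrix n₃ n₃ ℂ) =
      (P ⊗ₖ (1 : Matrix (n₂ × n₃) (n₂ × n₃) ℂ)).submatrix
        (Equiv.prodAssoc n₁ n₂ n₃) (Equiv.prodAssoc n₁ n₂ n₃) := by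
  rw [← one_kronecker_one, ← kronecker_assoc']
  rfl

variable {n₁ n₂ n₃ : Type*} [Fintype n₁] [DecidableEq n₁] [Fintype n₂] [DecidableEq n₂]
  [Fintype n₃] [DecidableEq n₃]

/-- The embedding `Y ↦ 1 ⊗ Y` of the observables of `H₂ ⊗ H₃` into those of `(H₁ ⊗ H₂) ⊗ H₃`, as a
homomorphism of star algebras. -/
def oneKronecker₃ (n₁ n₂ n₃ : Type*) [Fintype n₁] [DecidableEq n₁] [Fintype n₂] [DecidableEq n₂]
    [Fintype n₃] [DecidableEq n₃] :
    Matrix (n₂ × n₃) (n₂ × n₃) ℂ →⋆ₐ[ℂ] Matrix ((n₁ × n₂) × n₃) ((n₁ × n₂) × n₃) ℂ where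
  toFun Y := ((1 : Matrix n₁ n₁ ℂ) ⊗ₖ Y).submatrix
    (Equiv.prodAssoc n₁ n₂ n₃) (Equiv.prodAssoc n₁ n₂ n₃)
  map_one' := by rw [one_kronecker_one, submatrix_one_equiv]
  map_mul' X Y := by rw [submatrix_mul_equiv, ← mul_kronecker_mul, one_mul]
  map_zero' := by rw [kronecker_zero, submatrix_zero, Pi.zero_apply, Pi.zero_apply]
  map_add' X Y := by rw [kronecker_add, submatrix_add]; rfl
  commutes' r := by
    simp only [Algebra.algebraMap_eq_smul_one, kronecker_smul, one_kronecker_one, submatrix_smul,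
      Pi.smul_apply, submatrix_one_equiv]
  map_star' X := by
    simp only [star_eq_conjTranspose, conjTranspose_submatrix, conjTranspose_kronecker,
      conjTranspose_one]

theorem oneKronecker₃_apply (Y : Matrix (n₂ × n₃) (n₂ × n₃) ℂ) :
    oneKronecker₃ n₁ n₂ n₃ Y = ((1 : Matrix n₁ n₁ ℂ) ⊗ₖ Y).submatrix
      (Equiv.prodAssoc n₁ n₂ n₃) (Equiv.prodAssoc n₁ n₂ n₃) :=
  rfl

theorem kronecker_one_one_mul_oneKronecker₃ (P : Matrix n₁ n₁ ℂ)
    (Y : Matrix (n₂ × n₃) (n₂ × n₃) ℂ) :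
    ((P ⊗ₖ (1 : Matrix n₂ n₂ ℂ)) ⊗ₖ (1 : Matrix n₃ n₃ ℂ)) * oneKronecker₃ n₁ n₂ n₃ Y =
      oneKronecker₃ n₁ n₂ n₃ Y * ((P ⊗ₖ (1 : Matrix n₂ n₂ ℂ)) ⊗ₖ (1 : Matrix n₃ n₃ ℂ)) := by
  simp only [kronecker_one_one_eq_submatrix, oneKronecker₃_apply, submatrix_mul_equiv,
    ← mul_kronecker_mul, one_mul, mul_one]

theorem trace_ptraceFst₃_mul (ρ : Matrix ((n₁ × n₂) × n₃) ((n₁ × n₂) × n₃) ℂ)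
    (Y : Matrix (n₂ × n₃) (n₂ × n₃) ℂ) :
    trace (ptraceFst₃ ρ * Y) = trace (ρ * oneKronecker₃ n₁ n₂ n₃ Y) := by
  let e := Equiv.prodAssoc n₁ n₂ n₃
  calc trace (ptraceFst₃ ρ * Y)
      = trace (ρ.submatrix e.symm e.symm * ((1 : Matrix n₁ n₁ ℂ) ⊗ₖ Y)) := by
        rw [ptraceFst₃_eq_ptraceFst_submatrix, trace_ptraceFst_mul]
    _ = trace ((ρ * oneKronecker₃ n₁ n₂ n₃ Y).submatrix e.symm e.symm) := by
        rw [oneKronecker₃_apply, ← submatrix_mul_equiv _ _ _ e.symm, submatrix_submatrix,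
          Equiv.self_comp_symm, submatrix_id_id]
    _ = trace (ρ * oneKronecker₃ n₁ n₂ n₃ Y) :=
        e.symm.sum_comp (ρ * oneKronecker₃ n₁ n₂ n₃ Y).diag

theorem isTraceDual_measureMap {ι : Type*} [Fintype ι]
    (ρ : Matrix ((n₁ × n₂) × n₃) ((n₁ × n₂) × n₃) ℂ) (P : ι → Matrix n₁ n₁ ℂ) :
    IsTraceDual
      (measureMap (fun α => (P α ⊗ₖ (1 : Matrix n₂ n₂ ℂ)) ⊗ₖ (1 : Matrix n₃ n₃ ℂ))
        (oneKronecker₃ n₁ n₂ n₃)) ρ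
      (fun α => ptraceFst₃ (((P α ⊗ₖ (1 : Matrix n₂ n₂ ℂ)) ⊗ₖ (1 : Matrix n₃ n₃ ℂ)) * ρ)) := by
  intro Y
  simp only [measureMap, Finset.mul_sum, trace_sum]
  refine Finset.sum_congr rfl fun α _ => ?_
  rw [trace_ptraceFst₃_mul, mul_assoc, trace_mul_comm, mul_assoc,
    kronecker_one_one_mul_oneKronecker₃]

end Tripartite

theorem ptraceFst₃_kronecker_one_mul {n₁ n₂ n₃ : Type*} [Fintype n₁] [Fintype n₂]
    [DecidableEq n₂] [Fintype n₃] [DecidableEq n₃] (P : Matrix n₁ n₁ ℂ)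
    (ρ : Matrix ((n₁ × n₂) × n₃) ((n₁ × n₂) × n₃) ℂ) :
    ptraceFst₃ (((P ⊗ₖ (1 : Matrix n₂ n₂ ℂ)) ⊗ₖ (1 : Matrix n₃ n₃ ℂ)) *
        (ptraceSnd ρ ⊗ₖ (1 : Matrix n₃ n₃ ℂ))) =
      ptraceSnd (ptraceFst₃ (((P ⊗ₖ (1 : Matrix n₂ n₂ ℂ)) ⊗ₖ (1 : Matrix n₃ n₃ ℂ)) * ρ)) ⊗ₖ
        (1 : Matrix n₃ n₃ ℂ) := by
  rw [← mul_kronecker_mul, mul_one, ptraceFst₃_kronecker, ptraceSnd_ptraceFst₃,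
    ptraceSnd_kronecker_one_mul]

theorem partially_classical_stronger_subadditivity_general
    {n₁ n₂ n₃ ι : Type*} [Fintype n₁] [Fintype n₂] [Fintype n₃] [Fintype ι]
    [DecidableEq n₁] [DecidableEq n₂] [DecidableEq n₃]
    {ρ : Matrix ((n₁ × n₂) × n₃) ((n₁ × n₂) × n₃) ℂ} (hρ : ρ.PosSemidef)
    {P : ι → Matrix n₁ n₁ ℂ} (hP : ∀ α, (P α).PosSemidef) (hPsum : ∑ α, P α = 1) :
    entropy ρ - entropy (ptraceSnd ρ) ≤
      (∑ α, entropy (ptraceFst₃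
          (((P α ⊗ₖ (1 : Matrix n₂ n₂ ℂ)) ⊗ₖ (1 : Matrix n₃ n₃ ℂ)) * ρ)))
        - ∑ α, entropy (ptraceFst ((P α ⊗ₖ (1 : Matrix n₂ n₂ ℂ)) * ptraceSnd ρ)) := by
  have hΦ : IsUnitalSchwarz
      (measureMap (fun α => (P α ⊗ₖ (1 : Matrix n₂ n₂ ℂ)) ⊗ₖ (1 : Matrix n₃ n₃ ℂ))
        (oneKronecker₃ n₁ n₂ n₃)) :=
    isUnitalSchwarz_measureMap (fun α => ((hP α).kronecker .one).kronecker .one)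
      (by simp only [sum_kronecker_one, hPsum, one_kronecker_one])
      (fun α => kronecker_one_one_mul_oneKronecker₃ (P α))
  have hρ' := isTraceDual_measureMap ρ P
  have hmono := sum_relEntropy_le hΦ hρ' (isTraceDual_measureMap (ptraceSnd ρ ⊗ₖ 1) P) hρ
    ((ptraceSnd_posSemidef hρ).kronecker .one) (ker_ptraceSnd_kronecker_one_le hρ)
  simp only [ptraceFst₃_kronecker_one_mul, relEntropy_ptraceSnd_kronecker_one hρ,
    relEntropy_ptraceSnd_kronecker_one (hρ'.posSemidef hΦ hρ _),
    Finset.sum_sub_distrib] at hmono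
  simp only [ptraceSnd_ptraceFst₃, ptraceSnd_kronecker_one_mul] at hmono
  linarith

/-- **Partially classical form of stronger subadditivity**:
`S[ρ₁₂₃] − S[ρ₁₂] ≤ S^{cl,Q,Q}[ρ₁₂₃] − S^{cl,Q}[ρ₁₂]`. -/
theorem partially_classical_stronger_subadditivity
    {n₁ n₂ n₃ : Type*} [Fintype n₁] [Fintype n₂] [Fintype n₃]
    [DecidableEq n₁] [DecidableEq n₂] [DecidableEq n₃] {M : ℕ}
    (ρ : Matrix ((n₁ × n₂) × n₃) ((n₁ × n₂) × n₃) ℂ)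
    (hρ : ρ.PosSemidef) (hρtr : ρ.trace = 1)
    (P : Fin M → Matrix n₁ n₁ ℂ) (hP : ∀ α, (P α).PosSemidef)
    (hPsum : ∑ α, P α = 1) :
    entropy ρ - entropy (ptraceSnd ρ) ≤
      (∑ α, entropy (ptraceFst₃
          (((P α ⊗ₖ (1 : Matrix n₂ n₂ ℂ)) ⊗ₖ (1 : Matrix n₃ n₃ ℂ)) * ρ)))
        - ∑ α, entropy (ptraceFst ((P α ⊗ₖ (1 : Matrix n₂ n₂ ℂ)) * ptraceSnd ρ)) := by
  exact partially_classical_stronger_subadditivity_general hρ hP hPsum
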